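/- No-outliers variant of the finite-Minkowski-dimension bound: Suppose ℓ(θ,z) is L-Lipschitz in θ for every z and takes values in an interval of length b, Θ̂ⁿ ⊂ ℝ^k is finite and non-focal with |Θ̂ⁿ| > 2, and L·∇(Θ̂ⁿ) ≤ b·√( (2·dim_fM(Θ̂ⁿ)/n) · log(Δ(Θ̂ⁿ)/∇(Θ̂ⁿ)) ). Then Rad(Θ̂ⁿ, S⁺) ≤ 2b·√( (2·dim_fM(Θ̂ⁿ)/n) · log(Δ(Θ̂ⁿ)/∇(Θ̂ⁿ)) ). -/

import Mathlib

open MeasureTheory Real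

/-- Empirical Rademacher complexity of the set `C` on the sample `S` (`true ↔ +1`). -/
noncomputable def rad {X Z : Type*} (ℓ : X → Z → ℝ) {n : ℕ} (C : Set X) (S : Fin n → Z) : ℝ :=
  (n : ℝ)⁻¹ * ((2 ^ n : ℝ)⁻¹ *
    ∑ σ : Fin n → Bool, sSup ((fun θ => ∑ i, (if σ i then (1 : ℝ) else -1) * ℓ θ (S i)) '' C))

/-- Nearest-neighbour distance `ν_C(a) = min {d(a,b) : b ∈ C, b ≠ a}`. -/
noncomputable def nnDist {X : Type*} [PseudoMetricSpace X] (C : Finset X) (a : X) : ℝ :=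
  sInf ((fun b => dist a b) '' {b | b ∈ C ∧ b ≠ a})

/-- Covering diameter `∇(C) = max_{a ∈ C} ν_C(a)`. -/
noncomputable def covDiam {X : Type*} [PseudoMetricSpace X] (C : Finset X) : ℝ :=
  sSup (nnDist C '' (C : Set X))

/-- `T(C)`: minimal cardinality of a 2-cover of `C` (a family of subsets of `C`, each with at
least two elements, covering `C`) all of whose members have diameter at most `∇(C)`. -/
noncomputable def Tnum {X : Type*} [PseudoMetricSpace X] (C : Finset X) : ℕ :=
  sInf {m : ℕ | ∃ U : Finset (Finset X), U.card = m ∧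
    (∀ u ∈ U, u ⊆ C ∧ 2 ≤ u.card ∧ Metric.diam (u : Set X) ≤ covDiam C) ∧
    ∀ a ∈ C, ∃ u ∈ U, a ∈ u}

/-- Finite Minkowski dimension `dim_fM(C) = log T(C) / log(Δ(C)/∇(C))`. -/
noncomputable def dimfM {X : Type*} [PseudoMetricSpace X] (C : Finset X) : ℝ :=
  Real.log (Tnum C) / Real.log (Metric.diam (C : Set X) / covDiam C)

/-!
Fix a minimal 2-cover by sets of diameter at most `∇(C)` and pick one point in each member: this is
a net of at most `T(C)` points at resolution `∇(C)`. Replacing `C` by the net costs at most `L ∇(C)`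
by the Lipschitz condition, and Massart's finite class lemma, after centring the loss at the
midpoint of its range, bounds the complexity of the net by `(b / 2) √(2 log T(C) / n)`. The
definition of `dim_fM` is exactly what turns `log T(C)` into `dim_fM(C) log(Δ(C)/∇(C))`.
-/

section MaximalInequality

open scoped BigOperators

variable {Ω X : Type*} [Fintype Ω] [Nonempty Ω]

lemma exp_expect_le (f : Ω → ℝ) : exp (𝔼 ω, f ω) ≤ 𝔼 ω, exp (f ω) := by
  have hweights : ∑ _ω : Ω, (Fintype.card Ω : ℝ)⁻¹ = 1 := by simp
  have hjensen := convexOn_exp.map_sum_le (t := Finset.univ) (p := f)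
    (fun _ _ => by positivity) hweights fun _ _ => Set.mem_univ _
  simpa only [smul_eq_mul, inv_mul_eq_div, ← Finset.sum_div, Fintype.expect_eq_sum_div_card]
    using hjensen

lemma mul_expect_sSup_image_le {C : Finset X} (hC : C.Nonempty) (f : X → Ω → ℝ) (t K : ℝ)
    (hf : ∀ x ∈ C, 𝔼 ω, exp (t * f x ω) ≤ exp K) :
    t * 𝔼 ω, sSup ((f · ω) '' (C : Set X)) ≤ log C.card + K := by
  have hcard : (0 : ℝ) < C.card := by exact_mod_cast hC.card_pos
  have hmax (ω : Ω) :
      exp (t * sSup ((f · ω) '' (C : Set X))) ≤ ∑ x ∈ C, exp (t * f x ω) := by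
    obtain ⟨x, hx, hsup⟩ :=
      (hC.to_set.image (f · ω)).csSup_mem (C.finite_toSet.image _)
    rw [← hsup]
    exact Finset.single_le_sum (f := fun x => exp (t * f x ω)) (fun _ _ => (exp_pos _).le) hx
  rw [← exp_le_exp, exp_add, exp_log hcard, Finset.mul_expect]
  calc exp (𝔼 ω, t * sSup ((f · ω) '' (C : Set X)))
      ≤ 𝔼 ω, exp (t * sSup ((f · ω) '' (C : Set X))) := exp_expect_le _
    _ ≤ 𝔼 ω, ∑ x ∈ C, exp (t * f x ω) := Finset.expect_le_expect fun ω _ => hmax ω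
    _ = ∑ x ∈ C, 𝔼 ω, exp (t * f x ω) := Finset.expect_sum_comm _ _ _
    _ ≤ ∑ _x ∈ C, exp K := Finset.sum_le_sum hf
    _ = C.card * exp K := by rw [Finset.sum_const, nsmul_eq_mul]

lemma le_sqrt_of_forall_mul_le {x a v : ℝ} (h : ∀ t, t * x ≤ a + v * t ^ 2 / 2) :
    x ≤ √(2 * v * a) := by
  have hdiscrim : discrim (v / 2) (-x) a ≤ 0 :=
    discrim_le_zero fun t => by linarith [h t]
  refine le_sqrt_of_sq_le ?_
  rw [discrim] at hdiscrim
  linarith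

lemma expect_sSup_image_le_sqrt {C : Finset X} (hC : C.Nonempty) (f : X → Ω → ℝ) (v : ℝ)
    (hf : ∀ x ∈ C, ∀ t, 𝔼 ω, exp (t * f x ω) ≤ exp (v * t ^ 2 / 2)) :
    𝔼 ω, sSup ((f · ω) '' (C : Set X)) ≤ √(2 * v * log C.card) :=
  le_sqrt_of_forall_mul_le fun t =>
    mul_expect_sSup_image_le hC f t _ fun x hx => hf x hx t

end MaximalInequality

section RademacherSum

open scoped BigOperators

variable {ι X : Type*} [Fintype ι]

/-- The Rademacher sum `∑ᵢ σᵢ vᵢ`, with signs encoded as in `rad` (`true ↔ +1`). -/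
def rademacherSum (v : ι → ℝ) (σ : ι → Bool) : ℝ :=
  ∑ i, (if σ i then (1 : ℝ) else -1) * v i

lemma rademacherSum_sub (v w : ι → ℝ) (σ : ι → Bool) :
    rademacherSum (fun i => v i - w i) σ = rademacherSum v σ - rademacherSum w σ := by
  simp only [rademacherSum, mul_sub, Finset.sum_sub_distrib]

lemma abs_rademacherSum_le (v : ι → ℝ) (σ : ι → Bool) : |rademacherSum v σ| ≤ ∑ i, |v i| := by
  refine (Finset.abs_sum_le_sum_abs _ _).trans_eq (Finset.sum_congr rfl fun i _ => ?_)
  cases σ i <;> simp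

variable [DecidableEq ι]

lemma expect_rademacherSum (v : ι → ℝ) : 𝔼 σ, rademacherSum v σ = 0 := by
  have hflip := Fintype.expect_equiv (Equiv.piCongrRight fun _ : ι => Equiv.boolNot)
    (fun σ => -rademacherSum v σ) (rademacherSum v) fun σ => by
      simp only [rademacherSum, ← Finset.sum_neg_distrib]
      refine Finset.sum_congr rfl fun i _ => ?_
      cases hσ : σ i <;> simp [hσ]
  rw [Finset.expect_neg_distrib] at hflip
  linarith

lemma expect_exp_mul_rademacherSum (v : ι → ℝ) (t : ℝ) :
    𝔼 σ, exp (t * rademacherSum v σ) = ∏ i, cosh (t * v i) := by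
  have hcosh (i : ι) :
      cosh (t * v i) = (∑ s : Bool, exp (t * ((if s then (1 : ℝ) else -1) * v i))) / 2 := by
    simp [cosh_eq]
  simp_rw [hcosh, Finset.prod_div_distrib, Fintype.prod_sum, ← exp_sum, ← Finset.mul_sum]
  simp [Fintype.expect_eq_sum_div_card, rademacherSum]

lemma expect_exp_mul_rademacherSum_le (v : ι → ℝ) (t : ℝ) :
    𝔼 σ, exp (t * rademacherSum v σ) ≤ exp ((∑ i, v i ^ 2) * t ^ 2 / 2) := by
  calc 𝔼 σ, exp (t * rademacherSum v σ) = ∏ i, cosh (t * v i) :=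
        expect_exp_mul_rademacherSum v t
    _ ≤ ∏ i, exp ((t * v i) ^ 2 / 2) :=
        Finset.prod_le_prod (fun i _ => (cosh_pos _).le) fun i _ => cosh_le_exp_half_sq _
    _ = exp ((∑ i, v i ^ 2) * t ^ 2 / 2) := by
        rw [← exp_sum, ← Finset.sum_div, Finset.sum_mul]
        simp only [mul_pow, mul_comm]

lemma expect_sSup_rademacherSum_le {C : Finset X} (hC : C.Nonempty) (v : X → ι → ℝ) (V : ℝ)
    (hv : ∀ x ∈ C, ∑ i, v x i ^ 2 ≤ V) :
    𝔼 σ, sSup ((fun x => rademacherSum (v x) σ) '' (C : Set X)) ≤ √(2 * V * log C.card) := by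
  refine expect_sSup_image_le_sqrt hC _ V fun x hx t =>
    (expect_exp_mul_rademacherSum_le (v x) t).trans ?_
  gcongr
  exact hv x hx

end RademacherSum

section Rad

open scoped BigOperators

variable {X Z : Type*} {n : ℕ}

lemma rad_eq_expect (ℓ : X → Z → ℝ) (C : Set X) (S : Fin n → Z) :
    rad ℓ C S =
      (n : ℝ)⁻¹ * 𝔼 σ, sSup ((fun θ => rademacherSum (fun i => ℓ θ (S i)) σ) '' C) := by
  simp [rad, rademacherSum, Fintype.expect_eq_sum_div_card, inv_mul_eq_div]

lemma rad_sub_const (ℓ : X → Z → ℝ) (c : Z → ℝ) {C : Set X} (hC : C.Nonempty) (hfin : C.Finite)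
    (S : Fin n → Z) : rad (fun θ z => ℓ θ z - c z) C S = rad ℓ C S := by
  have hsSup (σ : Fin n → Bool) :
      sSup ((fun θ => rademacherSum (fun i => ℓ θ (S i) - c (S i)) σ) '' C) =
        sSup ((fun θ => rademacherSum (fun i => ℓ θ (S i)) σ) '' C) -
          rademacherSum (fun i => c (S i)) σ := by
    have hshift := (OrderIso.subRight (rademacherSum (fun i => c (S i)) σ)).map_csSup'
      (hC.image fun θ => rademacherSum (fun i => ℓ θ (S i)) σ) (hfin.image _).bddAbove
    rw [Set.image_image] at hshift
    simpa only [OrderIso.subRight_apply, rademacherSum_sub] using hshift.symm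
  simp only [rad_eq_expect, hsSup, Finset.expect_sub_distrib, expect_rademacherSum, sub_zero]

lemma rad_le_add_of_forall_exists_abs_sub_le (hn : 0 < n) {ℓ : X → Z → ℝ} {C D : Set X}
    (hC : C.Nonempty) (hD : D.Finite) {S : Fin n → Z} {ε : ℝ}
    (h : ∀ θ ∈ C, ∃ θ' ∈ D, ∀ i, |ℓ θ (S i) - ℓ θ' (S i)| ≤ ε) :
    rad ℓ C S ≤ ε + rad ℓ D S := by
  have hsSup (σ : Fin n → Bool) :
      sSup ((fun θ => rademacherSum (fun i => ℓ θ (S i)) σ) '' C) ≤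
        n * ε + sSup ((fun θ => rademacherSum (fun i => ℓ θ (S i)) σ) '' D) := by
    refine csSup_le (hC.image _) (Set.forall_mem_image.2 fun θ hθ => ?_)
    obtain ⟨θ', hθ', hdist⟩ := h θ hθ
    have hle_sup := le_csSup (hD.image _).bddAbove
      (Set.mem_image_of_mem (fun θ => rademacherSum (fun i => ℓ θ (S i)) σ) hθ')
    have hdiff : rademacherSum (fun i => ℓ θ (S i)) σ - rademacherSum (fun i => ℓ θ' (S i)) σ
        ≤ n * ε := by
      rw [← rademacherSum_sub]
      calc _ ≤ ∑ i, |ℓ θ (S i) - ℓ θ' (S i)| := (le_abs_self _).trans (abs_rademacherSum_le _ σ)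
        _ ≤ ∑ _i : Fin n, ε := Finset.sum_le_sum fun i _ => hdist i
        _ = n * ε := by simp
    linarith
  rw [rad_eq_expect, rad_eq_expect]
  calc _ ≤ (n : ℝ)⁻¹ *
          𝔼 σ, (n * ε + sSup ((fun θ => rademacherSum (fun i => ℓ θ (S i)) σ) '' D)) := by
        gcongr with σ
        exact hsSup σ
    _ = _ := by
        rw [Finset.expect_add_distrib, Fintype.expect_const]
        field_simp

lemma rad_le_of_abs_le {ℓ : X → Z → ℝ} {C : Finset X} (hC : C.Nonempty) {S : Fin n → Z} {r : ℝ}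
    (hr : 0 ≤ r) (hℓ : ∀ θ ∈ C, ∀ i, |ℓ θ (S i)| ≤ r) :
    rad ℓ (C : Set X) S ≤ r * √(2 * log C.card / n) := by
  have hsq (θ) (hθ : θ ∈ C) : ∑ i, ℓ θ (S i) ^ 2 ≤ n * r ^ 2 := by
    calc ∑ i, ℓ θ (S i) ^ 2 ≤ ∑ _i : Fin n, r ^ 2 :=
          Finset.sum_le_sum fun i _ => sq_le_sq.2 ((hℓ θ hθ i).trans (le_abs_self r))
      _ = n * r ^ 2 := by simp
  rw [rad_eq_expect]
  calc _ ≤ (n : ℝ)⁻¹ * √(2 * (n * r ^ 2) * log C.card) := by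
        gcongr
        exact expect_sSup_rademacherSum_le hC (fun θ i => ℓ θ (S i)) _ hsq
    _ = √((n : ℝ)⁻¹ ^ 2 * (2 * (n * r ^ 2) * log C.card)) := by
        rw [sqrt_mul (sq_nonneg (n : ℝ)⁻¹), sqrt_sq (by positivity)]
    _ = √(r ^ 2 * (2 * log C.card / n)) := by
        congr 1
        field_simp
    _ = r * √(2 * log C.card / n) := by
        rw [sqrt_mul (sq_nonneg r), sqrt_sq hr]

lemma rad_le_of_mem_Icc {ℓ : X → Z → ℝ} {C : Finset X} (hC : C.Nonempty) {S : Fin n → Z}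
    {a b : ℝ} (hab : a ≤ b) (hℓ : ∀ θ ∈ C, ∀ i, ℓ θ (S i) ∈ Set.Icc a b) :
    rad ℓ (C : Set X) S ≤ (b - a) / 2 * √(2 * log C.card / n) := by
  rw [← rad_sub_const ℓ (fun _ => (a + b) / 2) hC.to_set C.finite_toSet]
  refine rad_le_of_abs_le hC (by linarith) fun θ hθ i => abs_le.2 ?_
  obtain ⟨hlower, hupper⟩ := hℓ θ hθ i
  constructor <;> linarith

end Rad

section CoveringDiameter

variable {X : Type*}

section PseudoMetricSpace

variable [PseudoMetricSpace X] {C : Finset X}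

lemma exists_dist_eq_nnDist (hC : C.Nontrivial) (a : X) :
    ∃ b ∈ C, b ≠ a ∧ dist a b = nnDist C a := by
  have hne : {b | b ∈ C ∧ b ≠ a}.Nonempty := hC.exists_ne a
  have hfin : {b | b ∈ C ∧ b ≠ a}.Finite := C.finite_toSet.subset fun _ hb => hb.1
  obtain ⟨b, ⟨hb, hba⟩, hdist⟩ := (hne.image (dist a)).csInf_mem (hfin.image _)
  exact ⟨b, hb, hba, hdist⟩

lemma nnDist_le_covDiam {a : X} (ha : a ∈ C) : nnDist C a ≤ covDiam C :=
  le_csSup (C.finite_toSet.image _).bddAbove (Set.mem_image_of_mem _ ha)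

lemma covDiam_nonneg (C : Finset X) : 0 ≤ covDiam C :=
  sSup_nonneg <| Set.forall_mem_image.2 fun _ _ =>
    sInf_nonneg <| Set.forall_mem_image.2 fun _ _ => dist_nonneg

lemma nontrivial_of_covDiam_lt_diam (h : covDiam C < Metric.diam (C : Set X)) :
    C.Nontrivial := by
  by_contra hC
  rw [Metric.diam_subsingleton (Set.not_nontrivial_iff.1 hC)] at h
  exact (covDiam_nonneg C).not_gt h

/-- `U` is a 2-cover of `C` all of whose members have diameter at most `ε`. It unfolds to the
condition in `Tnum` when `ε = covDiam C`. -/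
def IsTwoCover (C : Finset X) (ε : ℝ) (U : Finset (Finset X)) : Prop :=
  (∀ u ∈ U, u ⊆ C ∧ 2 ≤ u.card ∧ Metric.diam (u : Set X) ≤ ε) ∧ ∀ a ∈ C, ∃ u ∈ U, a ∈ u

lemma exists_isTwoCover_covDiam (hC : C.Nontrivial) : ∃ U, IsTwoCover C (covDiam C) U := by
  classical
  choose nearest hmem hne hdist using exists_dist_eq_nnDist hC
  refine ⟨C.image fun a => {a, nearest a}, Finset.forall_mem_image.2 fun a ha => ?_, fun a ha =>
    ⟨{a, nearest a}, Finset.mem_image_of_mem _ ha, Finset.mem_insert_self _ _⟩⟩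
  refine ⟨Finset.insert_subset ha (Finset.singleton_subset_iff.2 (hmem a)),
    (Finset.card_pair (hne a).symm).ge, ?_⟩
  rw [Finset.coe_pair, Metric.diam_pair, hdist]
  exact nnDist_le_covDiam ha

lemma exists_isTwoCover_card_eq_Tnum (hC : C.Nontrivial) :
    ∃ U, U.card = Tnum C ∧ IsTwoCover C (covDiam C) U := by
  obtain ⟨U, hU⟩ := exists_isTwoCover_covDiam hC
  exact Nat.sInf_mem (s := {m | ∃ U, U.card = m ∧ IsTwoCover C (covDiam C) U}) ⟨_, U, rfl, hU⟩

lemma IsTwoCover.exists_net {ε : ℝ} {U : Finset (Finset X)} (hU : IsTwoCover C ε U) :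
    ∃ D ⊆ C, D.card ≤ U.card ∧ ∀ a ∈ C, ∃ d ∈ D, dist a d ≤ ε := by
  classical
  obtain ⟨hmembers, hcover⟩ := hU
  have hne (u : U) : (u : Finset X).Nonempty :=
    Finset.card_pos.1 (two_pos.trans_le (hmembers u u.2).2.1)
  choose center hcenter using hne
  refine ⟨U.attach.image center, ?_, ?_, fun a ha => ?_⟩
  · exact Finset.image_subset_iff.2 fun u _ => (hmembers u u.2).1 (hcenter u)
  · exact Finset.card_image_le.trans_eq U.card_attach
  · obtain ⟨u, hu, hau⟩ := hcover a ha
    refine ⟨center ⟨u, hu⟩, Finset.mem_image_of_mem _ (Finset.mem_attach _ _), ?_⟩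
    exact (Metric.dist_le_diam_of_mem u.finite_toSet.isBounded hau (hcenter ⟨u, hu⟩)).trans
      (hmembers u hu).2.2

end PseudoMetricSpace

section MetricSpace

variable [MetricSpace X] {C : Finset X}

lemma covDiam_pos (hC : C.Nontrivial) : 0 < covDiam C := by
  obtain ⟨a, ha⟩ := hC.nonempty
  obtain ⟨b, -, hba, hdist⟩ := exists_dist_eq_nnDist hC a
  exact (dist_pos.2 hba.symm).trans_le (hdist.trans_le (nnDist_le_covDiam ha))

lemma dimfM_mul_log (h : covDiam C < Metric.diam (C : Set X)) :
    dimfM C * log (Metric.diam (C : Set X) / covDiam C) = log (Tnum C) :=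
  div_mul_cancel₀ _
    (log_pos ((one_lt_div (covDiam_pos (nontrivial_of_covDiam_lt_diam h))).2 h)).ne'

end MetricSpace

end CoveringDiameter

theorem stmt_5_general {X Z : Type*} [MetricSpace X] {n : ℕ} (hn : 0 < n)
    (ℓ : X → Z → ℝ) (L a b : ℝ) (hL : 0 ≤ L) (C : Finset X) (S : Fin n → Z)
    (hLip : ∀ i, ∀ θ ∈ C, ∀ θ' ∈ C, |ℓ θ (S i) - ℓ θ' (S i)| ≤ L * dist θ θ')
    (hrange : ∀ θ ∈ C, ∀ i, ℓ θ (S i) ∈ Set.Icc a (a + b))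
    (hCnonfocal : covDiam C < Metric.diam (C : Set X)) :
    rad ℓ (C : Set X) S ≤ L * covDiam C + b / 2 *
      √((2 * dimfM C / n) * log (Metric.diam (C : Set X) / covDiam C)) := by
  have hC := nontrivial_of_covDiam_lt_diam hCnonfocal
  obtain ⟨U, hUcard, hU⟩ := exists_isTwoCover_card_eq_Tnum hC
  obtain ⟨D, hDC, hcard, hnet⟩ := hU.exists_net
  obtain ⟨θ₀, hθ₀⟩ := hC.nonempty
  have hD : D.Nonempty := (hnet θ₀ hθ₀).imp fun _ h => h.1
  rw [hUcard] at hcard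
  have hab : a ≤ a + b := (hrange θ₀ hθ₀ ⟨0, hn⟩).1.trans (hrange θ₀ hθ₀ ⟨0, hn⟩).2
  have happrox : rad ℓ (C : Set X) S ≤ L * covDiam C + rad ℓ (D : Set X) S :=
    rad_le_add_of_forall_exists_abs_sub_le hn hC.nonempty.to_set D.finite_toSet fun θ hθ => by
      obtain ⟨θ', hθ', hdist⟩ := hnet θ hθ
      exact ⟨θ', hθ', fun i => (hLip i θ hθ θ' (hDC hθ')).trans (by gcongr)⟩
  have hmassart : rad ℓ (D : Set X) S ≤ b / 2 * √(2 * log D.card / n) := by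
    simpa only [add_sub_cancel_left] using
      rad_le_of_mem_Icc hD hab fun θ hθ => hrange θ (hDC hθ)
  calc rad ℓ (C : Set X) S ≤ L * covDiam C + b / 2 * √(2 * log (Tnum C) / n) := by
        refine happrox.trans (add_le_add_right (hmassart.trans ?_) _)
        have hb : 0 ≤ b := by linarith
        have : 0 < D.card := hD.card_pos
        gcongr
    _ = _ := by rw [← dimfM_mul_log hCnonfocal]; ring_nf

/-- no-outliers variant of the finite-Minkowski-dimension bound.
If `ℓ` is `L`-Lipschitz in `θ` (w.r.t. the `ℓ∞` metric on `ℝᵏ`) and takes values in an interval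
of length `b`, `Θ̂ⁿ ⊂ ℝᵏ` is finite, non-focal, with `|Θ̂ⁿ| > 2`, and
`L ∇(Θ̂ⁿ) ≤ b √((2 dim_fM(Θ̂ⁿ)/n) log(Δ(Θ̂ⁿ)/∇(Θ̂ⁿ)))`, then
`Rad(Θ̂ⁿ, S⁺) ≤ 2b √((2 dim_fM(Θ̂ⁿ)/n) log(Δ(Θ̂ⁿ)/∇(Θ̂ⁿ)))`. -/
theorem stmt_5 {Z : Type*} (k n : ℕ) (hn : 0 < n)
    (ℓ : (Fin k → ℝ) → Z → ℝ) (L a b : ℝ) (hL : 0 ≤ L)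
    (hLip : ∀ z θ θ', |ℓ θ z - ℓ θ' z| ≤ L * dist θ θ')
    (hrange : ∀ θ z, ℓ θ z ∈ Set.Icc a (a + b))
    (C : Finset (Fin k → ℝ)) (hCcard : 2 < C.card)
    (hCnonfocal : covDiam C < Metric.diam (C : Set (Fin k → ℝ)))
    (hno : L * covDiam C ≤
      b * Real.sqrt ((2 * dimfM C / n) *
        Real.log (Metric.diam (C : Set (Fin k → ℝ)) / covDiam C)))
    (S : Fin n → Z) :
    rad ℓ (C : Set (Fin k → ℝ)) S ≤
      2 * b * Real.sqrt ((2 * dimfM C / n) *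
        Real.log (Metric.diam (C : Set (Fin k → ℝ)) / covDiam C)) := by
  linarith [stmt_5_general hn ℓ L a b hL C S (fun i θ _ θ' _ => hLip (S i) θ θ')
    (fun θ _ i => hrange θ (S i)) hCnonfocal, mul_nonneg hL (covDiam_nonneg C)]
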